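/- Let R > 0 and K ⊆ ℝ² be the closed disk of radius R centered at the origin. Let x, y : (t₀⁻, t₀⁺) → ℝ be continuously differentiable functions on an open interval containing 0 such that, setting r(t) := √(x(t)² + y(t)²) and g(t) := (x(t) − t)/(r(t) − R): (i) r(t) > R for all t; (ii) 1 > g(t)² + ((1 − sgn y(t))/2)·y(t)²/(r(t) − R)² for all t (in particular |g(t)| < 1); (iii) t ↦ g(t)/√(1 − g(t)²) is monotone increasing and (g(t) − x(t)/r(t))·x'(t) = (√(1 − g(t)²) + y(t)/r(t))·y'(t) for all t. Then f(t) := y(t) + (r(t) − R)·√(1 − g(t)²) defines a positive-valued convex continuously differentiable function with f'(t) = g(t)/√(1−g(t)²), and for every t the point (x(t), y(t)) is equidistant from K and the graph of f, with d((x(t),y(t)), graph f) = r(t) − R attained at (t, f(t)). -/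

import Mathlib

open Metric Set

noncomputable section

/-- `ℝ²` with the Euclidean (ℓ²) metric. -/
abbrev EucPlane := WithLp 2 (ℝ × ℝ)

/-- The point of the Euclidean plane with coordinates `(a, b)`. -/
def pt2 (a b : ℝ) : EucPlane := (WithLp.equiv 2 (ℝ × ℝ)).symm (a, b)

/-- The epigraph of `f : ℝ → ℝ`, viewed as a subset of the Euclidean plane. -/
def epigraph2 (f : ℝ → ℝ) : Set EucPlane :=
  {p | f ((WithLp.equiv 2 (ℝ × ℝ)) p).1 ≤ ((WithLp.equiv 2 (ℝ × ℝ)) p).2}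

/-!
Put `ρ = r - R`, the distance from `p = (x, y)` to `K`, and `s = √(1 - g²)`. The definitions of `g`
and `f` say exactly that `p = (t, f) + ρ • n` for the unit vector `n = (g, -s)`, while the
compatibility equation says `ρ' = ⟪n, p'⟫`. Since `ρ' = ⟪n, ρ' • n + ρ • n'⟫`, the vector `n` is
orthogonal to the velocity `(1, f')` of `(t, f)`, that is, `f' = g / s`. This is monotone, so `f` is
convex and its graph lies above each of its tangent lines; hence the point reached from `(t, f)` by
moving a distance `ρ` along the downward normal `n` is at distance exactly `ρ` from the graph.
-/

section Distance

theorem infDist_closedBall {E : Type*} [SeminormedAddCommGroup E] [NormedSpace ℝ E] {c p : E}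
    {R : ℝ} (hR : 0 ≤ R) (hp : R ≤ dist p c) : infDist p (closedBall c R) = dist p c - R := by
  apply le_antisymm
  · have hcancel : R / dist p c * dist p c = R :=
      div_mul_cancel_of_imp fun h => le_antisymm (h ▸ hp) hR
    set q := AffineMap.lineMap c p (R / dist p c)
    have hq : dist q c = R := by
      rw [dist_lineMap_left, dist_comm c p, Real.norm_of_nonneg (by positivity), hcancel]
    have hpq : dist p q = dist p c - R := by
      rw [dist_comm, dist_lineMap_right, dist_comm c p,
        Real.norm_of_nonneg (sub_nonneg.2 (div_le_one_of_le₀ hp dist_nonneg)), sub_mul, one_mul,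
        hcancel]
    exact hpq ▸ infDist_le_dist_of_mem (mem_closedBall.2 hq.le)
  · refine (le_infDist (nonempty_closedBall.2 hR)).2 fun q hq => ?_
    linarith [dist_triangle p q c, mem_closedBall.1 hq]

theorem infDist_add_smul_of_forall_inner_nonpos {E : Type*} [SeminormedAddCommGroup E]
    [InnerProductSpace ℝ E] {S : Set E} {p n : E} {ρ : ℝ} (hρ : 0 ≤ ρ) (hn : ‖n‖ = 1) (hp : p ∈ S)
    (hS : ∀ q ∈ S, inner ℝ n (q - p) ≤ 0) : infDist (p + ρ • n) S = ρ := by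
  apply le_antisymm
  · calc infDist (p + ρ • n) S ≤ dist (p + ρ • n) p := infDist_le_dist_of_mem hp
      _ = ρ := by rw [dist_self_add_left, norm_smul, hn, mul_one, Real.norm_of_nonneg hρ]
  · refine (le_infDist ⟨p, hp⟩).2 fun q hq => ?_
    calc ρ ≤ ρ - inner ℝ n (q - p) := by linarith [hS q hq]
      _ = inner ℝ n (p + ρ • n - q) := by
        rw [show p + ρ • n - q = ρ • n - (q - p) by abel, inner_sub_right n (ρ • n),
          real_inner_smul_right, real_inner_self_eq_norm_sq, hn, one_pow, mul_one]
      _ ≤ ‖n‖ * ‖p + ρ • n - q‖ := real_inner_le_norm _ _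
      _ = dist (p + ρ • n) q := by rw [hn, one_mul, dist_eq_norm]

end Distance

section Convex

variable {I : Set ℝ} {f f' : ℝ → ℝ}

theorem convexOn_of_hasDerivAt_of_monotoneOn (hIo : IsOpen I) (hIc : Convex ℝ I)
    (hf : ∀ t ∈ I, HasDerivAt f (f' t) t) (hf' : MonotoneOn f' I) : ConvexOn ℝ I f := by
  apply MonotoneOn.convexOn_of_deriv hIc
  · exact fun t ht => (hf t ht).continuousAt.continuousWithinAt
  · exact fun t ht => (hf t (interior_subset ht)).differentiableAt.differentiableWithinAt
  · rw [hIo.interior_eq]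
    exact hf'.congr fun t ht => (hf t ht).deriv.symm

theorem mul_sub_le_sub_of_convexOn {m t u : ℝ} (hf : ConvexOn ℝ I f) (ht : t ∈ I) (hu : u ∈ I)
    (hm : HasDerivAt f m t) : m * (u - t) ≤ f u - f t := by
  rcases lt_trichotomy u t with hut | rfl | htu
  · have hslope := hf.slope_le_of_hasDerivAt hu ht hut hm
    rw [slope_def_field, div_le_iff₀ (by linarith)] at hslope
    linarith
  · simp
  · have hslope := hf.le_slope_of_hasDerivAt ht hu htu hm
    rwa [slope_def_field, le_div_iff₀ (by linarith)] at hslope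

end Convex

section Plane

theorem norm_pt2 (a b : ℝ) : ‖pt2 a b‖ = √(a ^ 2 + b ^ 2) := by
  simp [WithLp.prod_norm_eq_of_L2, pt2]

theorem inner_pt2 (a b c d : ℝ) : inner ℝ (pt2 a b) (pt2 c d) = a * c + b * d := by
  simp [WithLp.prod_inner_apply, pt2, mul_comm]

theorem infDist_pt2_closedBall {a b R : ℝ} (hR : 0 ≤ R) (h : R ≤ √(a ^ 2 + b ^ 2)) :
    infDist (pt2 a b) (closedBall 0 R) = √(a ^ 2 + b ^ 2) - R := by
  rw [← norm_pt2, ← dist_zero_right] at h ⊢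
  exact infDist_closedBall hR h

theorem pt2_sub_pt2 (a b c d : ℝ) : pt2 a b - pt2 c d = pt2 (a - c) (b - d) := rfl

theorem pt2_add_pt2 (a b c d : ℝ) : pt2 a b + pt2 c d = pt2 (a + c) (b + d) := rfl

theorem smul_pt2 (k a b : ℝ) : k • pt2 a b = pt2 (k * a) (k * b) := rfl

/-- The downward unit vector with horizontal component `c`, for `|c| ≤ 1`. When `|c| < 1` it is the
lower unit normal of a graph at a point where the slope is `c / √(1 - c ^ 2)`. -/
def lowerNormal (c : ℝ) : EucPlane := pt2 c (-√(1 - c ^ 2))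

variable {c : ℝ}

theorem norm_lowerNormal (hc : c ^ 2 ≤ 1) : ‖lowerNormal c‖ = 1 := by
  rw [lowerNormal, norm_pt2, neg_sq, Real.sq_sqrt (sub_nonneg.2 hc), add_sub_cancel, Real.sqrt_one]

theorem dist_add_smul_lowerNormal {ρ : ℝ} (p : EucPlane) (hc : c ^ 2 ≤ 1) (hρ : 0 ≤ ρ) :
    dist (p + ρ • lowerNormal c) p = ρ := by
  rw [dist_self_add_left, norm_smul, norm_lowerNormal hc, mul_one, Real.norm_of_nonneg hρ]

theorem pt2_add_smul_lowerNormal {ρ t x y : ℝ} (hx : ρ * c = x - t) :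
    pt2 t (y + ρ * √(1 - c ^ 2)) + ρ • lowerNormal c = pt2 x y := by
  rw [lowerNormal, smul_pt2, pt2_add_pt2, hx]
  congr 1 <;> ring

variable {I : Set ℝ} {f : ℝ → ℝ} {t : ℝ}

theorem inner_lowerNormal_graph_sub_nonpos {u : ℝ} (hf : ConvexOn ℝ I f) (ht : t ∈ I) (hu : u ∈ I)
    (hc : c ^ 2 < 1) (hft : HasDerivAt f (c / √(1 - c ^ 2)) t) :
    inner ℝ (lowerNormal c) (pt2 u (f u) - pt2 t (f t)) ≤ 0 := by
  have hs : 0 < √(1 - c ^ 2) := Real.sqrt_pos.2 (sub_pos.2 hc)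
  have htangent := mul_sub_le_sub_of_convexOn hf ht hu hft
  rw [div_mul_eq_mul_div, div_le_iff₀ hs] at htangent
  rw [pt2_sub_pt2, lowerNormal, inner_pt2]
  linarith

theorem infDist_graph_add_smul_lowerNormal {ρ : ℝ} (hf : ConvexOn ℝ I f) (ht : t ∈ I)
    (hc : c ^ 2 < 1) (hft : HasDerivAt f (c / √(1 - c ^ 2)) t) (hρ : 0 ≤ ρ) :
    infDist (pt2 t (f t) + ρ • lowerNormal c) ((fun u => pt2 u (f u)) '' I) = ρ := by
  refine infDist_add_smul_of_forall_inner_nonpos hρ (norm_lowerNormal hc.le) ⟨t, ht, rfl⟩ ?_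
  rintro _ ⟨u, hu, rfl⟩
  exact inner_lowerNormal_graph_sub_nonpos hf ht hu hc hft

end Plane

section SignCondition

variable {c y ρ : ℝ}

theorem sq_lt_one_of_sign_condition
    (h : c ^ 2 + (1 - Real.sign y) / 2 * (y ^ 2 / ρ ^ 2) < 1) : c ^ 2 < 1 := by
  have hsign : 0 ≤ (1 - Real.sign y) / 2 := by
    rcases Real.sign_apply_eq y with hy | hy | hy <;> norm_num [hy]
  have hnonneg : 0 ≤ (1 - Real.sign y) / 2 * (y ^ 2 / ρ ^ 2) := by positivity
  linarith

theorem add_mul_sqrt_pos_of_sign_condition (hρ : 0 < ρ)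
    (h : c ^ 2 + (1 - Real.sign y) / 2 * (y ^ 2 / ρ ^ 2) < 1) : 0 < y + ρ * √(1 - c ^ 2) := by
  have hs : 0 < √(1 - c ^ 2) := Real.sqrt_pos.2 (sub_pos.2 (sq_lt_one_of_sign_condition h))
  rcases lt_or_ge y 0 with hy | hy
  · rw [Real.sign_of_neg hy] at h
    have hlt : -y / ρ < √(1 - c ^ 2) := by
      apply Real.lt_sqrt_of_sq_lt
      rw [div_pow, neg_sq]
      linarith
    rw [div_lt_iff₀' hρ] at hlt
    linarith
  · positivity

end SignCondition

section Derivative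

variable {t x' y' : ℝ} {y : ℝ → ℝ}

theorem hasDerivAt_sqrt_sq_add_sq {x : ℝ → ℝ} (hx : HasDerivAt x x' t) (hy : HasDerivAt y y' t)
    (hxy : 0 < √(x t ^ 2 + y t ^ 2)) :
    HasDerivAt (fun u => √(x u ^ 2 + y u ^ 2))
      ((x t * x' + y t * y') / √(x t ^ 2 + y t ^ 2)) t := by
  convert ((hx.fun_pow 2).fun_add (hy.fun_pow 2)).sqrt (Real.sqrt_pos.1 hxy).ne' using 1
  field_simp
  ring

theorem hasDerivAt_add_mul_sqrt_one_sub_sq {ρ g : ℝ → ℝ} {ρ' : ℝ} (hy : HasDerivAt y y' t)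
    (hρ : HasDerivAt ρ ρ' t) (hg : DifferentiableAt ℝ g t)
    (hx : HasDerivAt (fun u => u + ρ u * g u) x' t) (hgt : g t ^ 2 < 1)
    (hcomp : g t * x' = √(1 - g t ^ 2) * y' + ρ') :
    HasDerivAt (fun u => y u + ρ u * √(1 - g u ^ 2)) (g t / √(1 - g t ^ 2)) t := by
  have hs : 0 < √(1 - g t ^ 2) := Real.sqrt_pos.2 (sub_pos.2 hgt)
  have hs_sq : √(1 - g t ^ 2) ^ 2 = 1 - g t ^ 2 := Real.sq_sqrt (sub_pos.2 hgt).le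
  have hsqrt : HasDerivAt (fun u => √(1 - g u ^ 2)) (-(g t * deriv g t) / √(1 - g t ^ 2)) t := by
    convert ((hg.hasDerivAt.fun_pow 2).const_sub 1).sqrt (sub_pos.2 hgt).ne' using 1
    field_simp
    ring
  have hx_eq : x' = 1 + (ρ' * g t + ρ t * deriv g t) :=
    hx.unique ((hasDerivAt_id' t).fun_add (hρ.fun_mul hg.hasDerivAt))
  refine (hy.fun_add (hρ.fun_mul hsqrt)).congr_deriv ?_
  field_simp
  linear_combination ρ' * hs_sq - hcomp + g t * hx_eq

end Derivative

theorem stmt18_general (R : ℝ) (hR : 0 ≤ R) (I : Set ℝ) (hIo : IsOpen I) (hIc : Convex ℝ I)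
    (x y x' y' : ℝ → ℝ)
    (hx : ∀ t ∈ I, HasDerivAt x (x' t) t)
    (hy : ∀ t ∈ I, HasDerivAt y (y' t) t)
    (r g : ℝ → ℝ)
    (hr : ∀ t : ℝ, r t = √(x t ^ 2 + y t ^ 2))
    (hg : ∀ t : ℝ, g t = (x t - t) / (r t - R))
    (h1 : ∀ t ∈ I, R < r t)
    (h2 : ∀ t ∈ I, g t ^ 2 + (1 - Real.sign (y t)) / 2 * (y t ^ 2 / (r t - R) ^ 2) < 1)
    (h3mono : MonotoneOn (fun t => g t / √(1 - g t ^ 2)) I)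
    (h3comp : ∀ t ∈ I, (g t - x t / r t) * x' t = (√(1 - g t ^ 2) + y t / r t) * y' t)
    (f : ℝ → ℝ)
    (hf : ∀ t : ℝ, f t = y t + (r t - R) * √(1 - g t ^ 2)) :
    (∀ t ∈ I, 0 < f t) ∧
    ConvexOn ℝ I f ∧
    (∀ t ∈ I, HasDerivAt f (g t / √(1 - g t ^ 2)) t) ∧
    ContinuousOn (fun t => g t / √(1 - g t ^ 2)) I ∧
    ∀ t ∈ I,
      infDist (pt2 (x t) (y t)) (closedBall 0 R) =
          infDist (pt2 (x t) (y t)) ((fun s => pt2 s (f s)) '' I) ∧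
      infDist (pt2 (x t) (y t)) ((fun s => pt2 s (f s)) '' I) = r t - R ∧
      dist (pt2 (x t) (y t)) (pt2 t (f t)) = r t - R := by
  have hρ : ∀ t ∈ I, 0 < r t - R := fun t ht => sub_pos.2 (h1 t ht)
  have hg_sq : ∀ t ∈ I, g t ^ 2 < 1 := fun t ht => sq_lt_one_of_sign_condition (h2 t ht)
  have hρg : ∀ t ∈ I, (r t - R) * g t = x t - t := fun t ht => by
    rw [hg t, mul_div_cancel₀ _ (hρ t ht).ne']
  have hr_deriv : ∀ t ∈ I, HasDerivAt r ((x t * x' t + y t * y' t) / r t) t := fun t ht => by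
    rw [hr t, funext hr]
    exact hasDerivAt_sqrt_sq_add_sq (hx t ht) (hy t ht) (hr t ▸ hR.trans_lt (h1 t ht))
  have hg_diff : ∀ t ∈ I, DifferentiableAt ℝ g t := fun t ht => by
    rw [funext hg]
    exact ((hx t ht).differentiableAt.fun_sub differentiableAt_fun_id).fun_div
      ((hr_deriv t ht).differentiableAt.sub_const R) (hρ t ht).ne'
  have hderiv : ∀ t ∈ I, HasDerivAt f (g t / √(1 - g t ^ 2)) t := fun t ht => by
    rw [funext hf]
    refine hasDerivAt_add_mul_sqrt_one_sub_sq (hy t ht) ((hr_deriv t ht).sub_const R)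
      (hg_diff t ht) ((hx t ht).congr_of_eventuallyEq ?_) (hg_sq t ht) ?_
    · filter_upwards [hIo.mem_nhds ht] with u hu
      rw [hρg u hu, add_sub_cancel]
    · linear_combination h3comp t ht
  have hconv : ConvexOn ℝ I f := convexOn_of_hasDerivAt_of_monotoneOn hIo hIc hderiv h3mono
  have hg_cont : ContinuousOn g I := fun t ht => (hg_diff t ht).continuousAt.continuousWithinAt
  refine ⟨fun t ht => hf t ▸ add_mul_sqrt_pos_of_sign_condition (hρ t ht) (h2 t ht), hconv, hderiv,
    hg_cont.div (by fun_prop) fun t ht => (Real.sqrt_pos.2 (sub_pos.2 (hg_sq t ht))).ne', ?_⟩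
  intro t ht
  have hfoot : pt2 t (f t) + (r t - R) • lowerNormal (g t) = pt2 (x t) (y t) :=
    hf t ▸ pt2_add_smul_lowerNormal (hρg t ht)
  have hinfDist : infDist (pt2 (x t) (y t)) ((fun s => pt2 s (f s)) '' I) = r t - R :=
    hfoot ▸ infDist_graph_add_smul_lowerNormal hconv ht (hg_sq t ht) (hderiv t ht) (hρ t ht).le
  refine ⟨?_, hinfDist, hfoot ▸ dist_add_smul_lowerNormal _ (hg_sq t ht).le (hρ t ht).le⟩
  rw [hinfDist, hr t, infDist_pt2_closedBall hR (hr t ▸ (h1 t ht).le)]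

theorem stmt18 (R : ℝ) (hR : 0 < R)
    (K : Set EucPlane) (hK : K = Metric.closedBall (0 : EucPlane) R)
    (a b : ℝ) (ha : a < 0) (hb : 0 < b)
    (x y x' y' : ℝ → ℝ)
    (hx : ∀ t ∈ Set.Ioo a b, HasDerivAt x (x' t) t)
    (hy : ∀ t ∈ Set.Ioo a b, HasDerivAt y (y' t) t)
    (hx' : ContinuousOn x' (Set.Ioo a b)) (hy' : ContinuousOn y' (Set.Ioo a b))
    (r g : ℝ → ℝ)
    (hr : ∀ t : ℝ, r t = Real.sqrt (x t ^ 2 + y t ^ 2))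
    (hg : ∀ t : ℝ, g t = (x t - t) / (r t - R))
    (h1 : ∀ t ∈ Set.Ioo a b, R < r t)
    (h2 : ∀ t ∈ Set.Ioo a b,
      g t ^ 2 + (1 - Real.sign (y t)) / 2 * (y t ^ 2 / (r t - R) ^ 2) < 1)
    (h3mono : MonotoneOn (fun t => g t / Real.sqrt (1 - g t ^ 2)) (Set.Ioo a b))
    (h3comp : ∀ t ∈ Set.Ioo a b,
      (g t - x t / r t) * x' t = (Real.sqrt (1 - g t ^ 2) + y t / r t) * y' t)
    (f : ℝ → ℝ)
    (hf : ∀ t : ℝ, f t = y t + (r t - R) * Real.sqrt (1 - g t ^ 2)) :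
    (∀ t ∈ Set.Ioo a b, 0 < f t) ∧
    ConvexOn ℝ (Set.Ioo a b) f ∧
    (∀ t ∈ Set.Ioo a b, HasDerivAt f (g t / Real.sqrt (1 - g t ^ 2)) t) ∧
    ∀ t ∈ Set.Ioo a b,
      Metric.infDist (pt2 (x t) (y t)) K =
          Metric.infDist (pt2 (x t) (y t)) ((fun s => pt2 s (f s)) '' Set.Ioo a b) ∧
      Metric.infDist (pt2 (x t) (y t)) ((fun s => pt2 s (f s)) '' Set.Ioo a b) = r t - R ∧
      dist (pt2 (x t) (y t)) (pt2 t (f t)) = r t - R := by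
  subst hK
  obtain ⟨hpos, hconv, hderiv, -, hdist⟩ := stmt18_general R hR.le (Set.Ioo a b) isOpen_Ioo
    (convex_Ioo a b) x y x' y' hx hy r g hr hg h1 h2 h3mono h3comp f hf
  exact ⟨hpos, hconv, hderiv, hdist⟩

end
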